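/- Let m and k be positive integers such that gcd(k, m) = 1, m is odd, and m > k + 2. For z ∈ F_{2^k} define f^{(z)} : F_{2^m} × F_{2^m} → F_2 by f^{(z)}(x₁,x₂) = Tr_1^m(x₁ · x₂^{2^k + 1}) if Tr_1^k(z) = 0 and f^{(z)}(x₁,x₂) = Tr_1^m(x₂ · x₁^{2^k + 1}) if Tr_1^k(z) = 1, and define f : F_{2^m} × F_{2^m} × F_{2^k} × F_{2^k} → F_2 by f(x₁,x₂,y,z) = f^{(z)}(x₁,x₂) + Tr_1^k(yz). Then f is a bent function and every M-subspace of f has F_2-dimension strictly less than m + k. -/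

import Mathlib

/-- The second-order derivative `D_a D_b f (x) = f x + f (x+a) + f (x+b) + f (x+a+b)`. -/
def D2 {V : Type*} [AddCommGroup V] (f : V → ZMod 2) (a b x : V) : ZMod 2 :=
  f x + f (x + a) + f (x + b) + f (x + a + b)

/-- An `M`-subspace of `f` : a subspace on which all second-order derivatives of `f` vanish. -/
def IsMSubspace {V : Type*} [AddCommGroup V] [Module (ZMod 2) V] (f : V → ZMod 2)
    (U : Submodule (ZMod 2) V) : Prop :=
  ∀ a ∈ U, ∀ b ∈ U, ∀ x, D2 f a b x = 0

/-- A Boolean function on a finite `F₂`-vector space is bent if every nonzero derivative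
is balanced. -/
def IsBent {V : Type*} [AddCommGroup V] (f : V → ZMod 2) : Prop :=
  ∀ a : V, a ≠ 0 → ∀ c : ZMod 2,
    Nat.card {x : V // f (x + a) + f x = c} = Nat.card V / 2

/-- The absolute trace map of `F_{2^m}`. -/
noncomputable def Tr (m : ℕ) (x : GaloisField 2 m) : ZMod 2 :=
  Algebra.trace (ZMod 2) (GaloisField 2 m) x

theorem aux_zmod2 (c : ZMod 2) : c = 0 ∨ c = 1 := by
  revert c; decide

theorem aux_z2 (a : ZMod 2) : a + a = 0 := by
  revert a; decide

theorem aux_bal {V : Type*} [Finite V] (g : V → ZMod 2) (T : V → V)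
    (hT : Function.Injective T) (h : ∀ x, g (T x) = g x + 1) (c : ZMod 2) :
    Nat.card {x : V // g x = c} = Nat.card V / 2 := by
  classical
  have key : ∀ c : ZMod 2, Nat.card {x : V // g x = c} ≤ Nat.card {x : V // g x = c + 1} := by
    intro c
    refine Nat.card_le_card_of_injective
      (fun x => (⟨T x.1, by rw [h, x.2]⟩ : {x : V // g x = c + 1})) ?_
    intro x y hxy
    exact Subtype.ext (hT (congrArg Subtype.val hxy))
  have h1 := key c
  have h2 := key (c + 1)
  have e : c + 1 + 1 = c := by rw [add_assoc, aux_z2, add_zero]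
  rw [e] at h2
  have h3 : Nat.card V = Nat.card {x : V // g x = c} + Nat.card {x : V // ¬ g x = c} := by
    rw [← Nat.card_sum]
    exact Nat.card_congr (Equiv.sumCompl _).symm
  have h4 : Nat.card {x : V // ¬ g x = c} = Nat.card {x : V // g x = c + 1} := by
    refine Nat.card_congr (Equiv.subtypeEquivRight ?_)
    intro x
    have hd : ∀ c d : ZMod 2, ¬ d = c ↔ d = c + 1 := by decide
    exact hd c (g x)
  omega

theorem aux_Tr_add (m : ℕ) (x y : GaloisField 2 m) : Tr m (x + y) = Tr m x + Tr m y :=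
  map_add _ _ _

theorem aux_Tr_zero (m : ℕ) : Tr m 0 = 0 := map_zero _

theorem aux_exists_tr (m : ℕ) (c : GaloisField 2 m) (hc : c ≠ 0) : ∃ u, Tr m (u * c) = 1 := by
  by_contra! H
  have htr := (traceForm_nondegenerate (ZMod 2) (GaloisField 2 m)).1 c
  apply hc
  apply htr
  intro u
  rw [Algebra.traceForm_apply, mul_comm]
  exact (aux_zmod2 _).resolve_right (H u)

theorem aux_pow_eq_one {m n : ℕ} (hm : 0 < m) (hn : Nat.gcd n m = 1) (u : GaloisField 2 m)
    (hu : u ≠ 0) (h : u ^ (2 ^ n - 1) = 1) : u = 1 := by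
  have : Fintype (GaloisField 2 m) := Fintype.ofFinite _
  have h2 : u ^ (2 ^ m - 1) = 1 := by
    have := FiniteField.pow_card_sub_one_eq_one u hu
    rwa [← Nat.card_eq_fintype_card, GaloisField.card 2 m hm.ne'] at this
  have h3 : u ^ Nat.gcd (2 ^ n - 1) (2 ^ m - 1) = 1 := by
    rw [pow_gcd_eq_one]
    exact ⟨h, h2⟩
  rw [Nat.pow_sub_one_gcd_pow_sub_one, hn] at h3
  simpa using h3

theorem aux_gold_inj {m k : ℕ} (hm : 0 < m) (hgcd : Nat.gcd k m = 1) (hodd : Odd m) :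
    Function.Injective (fun x : GaloisField 2 m => x ^ (2 ^ k + 1)) := by
  intro x y hxy
  simp only at hxy
  by_cases hy : y = 0
  · subst hy
    simpa using hxy
  have hx : x ≠ 0 := by
    rintro rfl
    rw [zero_pow (Nat.succ_ne_zero _)] at hxy
    exact hy (pow_eq_zero_iff (Nat.succ_ne_zero _) |>.1 hxy.symm)
  have h1 : (x / y) ^ (2 ^ k + 1) = 1 := by
    rw [div_pow, hxy, div_self (pow_ne_zero _ hy)]
  have h2 : (x / y) ^ (2 ^ (2 * k) - 1) = 1 := by
    have : 2 ^ (2 * k) - 1 = (2 ^ k + 1) * (2 ^ k - 1) := by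
      rw [mul_comm 2 k, pow_mul, ← Nat.sq_sub_sq, one_pow]
    rw [this, pow_mul, h1, one_pow]
  have h3 := aux_pow_eq_one hm (n := 2 * k) ?_ _ (div_ne_zero hx hy) h2
  · exact (div_eq_one_iff_eq hy).1 h3
  · exact Nat.Coprime.mul_left (Nat.coprime_two_left.2 hodd) hgcd

theorem aux_dep {m k : ℕ} (hm : 0 < m) (hgcd : Nat.gcd k m = 1) (a b : GaloisField 2 m)
    (h : a ^ (2 ^ k + 1) + b ^ (2 ^ k + 1) + (a + b) ^ (2 ^ k + 1) = 0) :
    a = 0 ∨ b = 0 ∨ a = b := by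
  by_contra! H
  obtain ⟨ha, hb, hab⟩ := H
  apply hab
  have h2 : (2 : GaloisField 2 m) = 0 := CharTwo.two_eq_zero
  have h1 : a ^ 2 ^ k * b = b ^ 2 ^ k * a := by
    have := add_pow_char_pow a b (p := 2) (n := k)
    rw [pow_succ, pow_succ, pow_succ, this] at h
    linear_combination h - (a ^ 2 ^ k * a + b ^ 2 ^ k * b + b ^ 2 ^ k * a) * h2
  have h3 : (a / b) ^ (2 ^ k - 1) = 1 := by
    have h4 : (a / b) ^ (2 ^ k - 1) * (a / b) = 1 * (a / b) := by
      rw [← pow_succ, Nat.sub_add_cancel Nat.one_le_two_pow, div_pow]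
      field_simp
      linear_combination h1
    exact mul_right_cancel₀ (div_ne_zero ha hb) h4
  exact (div_eq_one_iff_eq hb).1 (aux_pow_eq_one hm hgcd _ (div_ne_zero ha hb) h3)

theorem aux_rank_one {m : ℕ} (A : Submodule (ZMod 2) (GaloisField 2 m))
    (h : ∀ a ∈ A, ∀ b ∈ A, a = 0 ∨ b = 0 ∨ a = b) : Module.finrank (ZMod 2) A ≤ 1 := by
  by_cases H : ∃ a ∈ A, a ≠ 0
  · obtain ⟨a, haA, ha⟩ := H
    apply finrank_le_one (⟨a, haA⟩ : A)
    rintro ⟨b, hb⟩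
    rcases h a haA b hb with h | h | h
    · exact absurd h ha
    · exact ⟨0, Subtype.ext (by simp [h])⟩
    · exact ⟨1, by simp [h]⟩
  · push Not at H
    apply finrank_le_one (0 : A)
    rintro ⟨b, hb⟩
    exact ⟨0, Subtype.ext (by simp [H b hb])⟩

theorem aux_rank_prod {M N : Type*} [AddCommGroup M] [AddCommGroup N] [Module (ZMod 2) M]
    [Module (ZMod 2) N] [FiniteDimensional (ZMod 2) M] [FiniteDimensional (ZMod 2) N]
    (W : Submodule (ZMod 2) (M × N)) :
    Module.finrank (ZMod 2) W ≤
      Module.finrank (ZMod 2) (W.map (LinearMap.fst (ZMod 2) M N)) +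
      Module.finrank (ZMod 2) (W.map (LinearMap.snd (ZMod 2) M N)) := by
  have hle : W ≤ (W.map (LinearMap.fst (ZMod 2) M N)).prod (W.map (LinearMap.snd (ZMod 2) M N)) :=
    fun x hx => ⟨⟨x, hx, rfl⟩, ⟨x, hx, rfl⟩⟩
  rw [← Module.finrank_prod]
  refine LinearMap.finrank_le_finrank_of_injective
    (f := ((LinearMap.fst (ZMod 2) M N).submoduleMap W).prod
      ((LinearMap.snd (ZMod 2) M N).submoduleMap W)) ?_
  intro x y hxy
  apply Subtype.ext
  have h1 := congrArg (fun t => (t.1 : M)) hxy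
  have h2 := congrArg (fun t => (t.2 : N)) hxy
  exact Prod.ext h1 h2

theorem aux_slice {m d : ℕ} (hbij : Function.Bijective (fun x : GaloisField 2 m => x ^ d))
    (a₁ a₂ : GaloisField 2 m) (ha : a₁ ≠ 0 ∨ a₂ ≠ 0) :
    ∃ T : GaloisField 2 m × GaloisField 2 m → GaloisField 2 m × GaloisField 2 m,
      Function.Injective T ∧ ∀ x₁ x₂,
        Tr m (((T (x₁, x₂)).1 + a₁) * ((T (x₁, x₂)).2 + a₂) ^ d) +
          Tr m ((T (x₁, x₂)).1 * (T (x₁, x₂)).2 ^ d) =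
        Tr m ((x₁ + a₁) * (x₂ + a₂) ^ d) + Tr m (x₁ * x₂ ^ d) + 1 := by
  by_cases h2 : a₂ = 0
  · subst h2
    obtain ⟨u, hu⟩ := aux_exists_tr m a₁ (by simpa using ha)
    let e := Equiv.ofBijective _ hbij
    have he : ∀ x, (e.symm x) ^ d = x := fun x => e.apply_symm_apply x
    refine ⟨fun p => (p.1, e.symm (p.2 ^ d + u)), ?_, ?_⟩
    · rintro ⟨x₁, x₂⟩ ⟨y₁, y₂⟩ h
      simp only [Prod.mk.injEq, EmbeddingLike.apply_eq_iff_eq, add_left_inj] at h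
      exact Prod.ext h.1 (hbij.1 h.2)
    · intro x₁ x₂
      simp only [add_zero, he, mul_add, add_mul, aux_Tr_add]
      rw [mul_comm a₁ u, hu]
      linear_combination aux_z2 (Tr m (x₁ * u))
  · have hne : ∀ x : GaloisField 2 m, (x + a₂) ^ d + x ^ d ≠ 0 := by
      intro x h
      have h3 : x + a₂ = x := hbij.1 (CharTwo.add_eq_zero.1 h)
      exact h2 (by simpa using h3)
    choose u hu using fun x => aux_exists_tr m _ (hne x)
    refine ⟨fun p => (p.1 + u p.2, p.2), ?_, ?_⟩
    · rintro ⟨x₁, x₂⟩ ⟨y₁, y₂⟩ h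
      simp only [Prod.mk.injEq] at h
      obtain ⟨h1, rfl⟩ := h
      exact Prod.ext (add_right_cancel h1) rfl
    · intro x₁ x₂
      have h4 := hu x₂
      simp only [mul_add, add_mul, aux_Tr_add] at h4 ⊢
      linear_combination h4

/-- Corollary 3.12: the generalized Maiorana–McFarland function built from the two
Maiorana–McFarland functions `Tr(x₁ x₂^{2^k+1})` and `Tr(x₂ x₁^{2^k+1})` (Gold
permutation) is a bent function with no `M`-subspace of dimension `m + k`, hence lies
outside the completed Maiorana–McFarland class. -/
theorem GMM_gold_bent_outside_MM
    (m k : ℕ) (hk : 0 < k) (hm : 0 < m) (hgcd : Nat.gcd k m = 1) (hodd : Odd m)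
    (hmk : m > k + 2)
    (f : GaloisField 2 m × GaloisField 2 m × GaloisField 2 k × GaloisField 2 k → ZMod 2)
    (hf : ∀ (x₁ x₂ : GaloisField 2 m) (y z : GaloisField 2 k),
      f (x₁, x₂, y, z) =
        (if Tr k z = 0 then Tr m (x₁ * x₂ ^ (2 ^ k + 1)) else Tr m (x₂ * x₁ ^ (2 ^ k + 1)))
          + Tr k (y * z)) :
    IsBent f ∧
    ∀ U : Submodule (ZMod 2)
        (GaloisField 2 m × GaloisField 2 m × GaloisField 2 k × GaloisField 2 k),
      IsMSubspace f U → Module.finrank (ZMod 2) U < m + k := by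
  have hinj := aux_gold_inj hm hgcd hodd (k := k)
  have hbij := Finite.injective_iff_bijective.1 hinj
  constructor
  · rintro ⟨a₁, a₂, b, c⟩ ha e
    by_cases hc : c = 0
    · subst hc
      by_cases h12 : a₁ ≠ 0 ∨ a₂ ≠ 0
      · obtain ⟨S, hSi, hS⟩ := aux_slice hbij a₁ a₂ h12
        obtain ⟨T, hTi, hT⟩ := aux_slice hbij a₂ a₁ h12.symm
        refine aux_bal _ (fun x => if Tr k x.2.2.2 = 0 then
            ((S (x.1, x.2.1)).1, (S (x.1, x.2.1)).2, x.2.2)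
          else ((T (x.2.1, x.1)).2, (T (x.2.1, x.1)).1, x.2.2)) ?_ ?_ e
        · rintro ⟨x₁, x₂, y, z⟩ ⟨x₁', x₂', y', z'⟩ h
          simp only at h
          have hz : (y, z) = (y', z') := by
            have := congrArg (fun t => t.2.2) h
            split_ifs at this <;> exact this
          obtain ⟨rfl, rfl⟩ := Prod.mk.injEq _ _ _ _ ▸ hz
          by_cases h0 : Tr k z = 0
          · simp only [h0, if_true, Prod.mk.injEq] at h
            have := hSi (Prod.ext h.1 h.2.1)
            simp only [Prod.mk.injEq] at this
            rw [this.1, this.2]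
          · simp only [h0, if_false, Prod.mk.injEq] at h
            have := hTi (Prod.ext h.2.1 h.1)
            simp only [Prod.mk.injEq] at this
            rw [this.1, this.2]
        · rintro ⟨x₁, x₂, y, z⟩
          by_cases h0 : Tr k z = 0
          · simp only [h0, if_true, Prod.mk_add_mk, hf, add_zero]
            linear_combination hS x₁ x₂
          · simp only [h0, if_false, Prod.mk_add_mk, hf, add_zero]
            linear_combination hT x₂ x₁
      · push Not at h12
        obtain ⟨rfl, rfl⟩ := h12
        have hb : b ≠ 0 := by
          rintro rfl
          exact ha rfl
        obtain ⟨u, hu⟩ := aux_exists_tr k b hb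
        rw [mul_comm] at hu
        refine aux_bal _ (fun x => x + (0, 0, 0, u)) (add_left_injective _) ?_ e
        rintro ⟨x₁, x₂, y, z⟩
        simp only [Prod.mk_add_mk, hf, add_zero, add_mul, mul_add, aux_Tr_add, hu]
        generalize (if Tr k z = 0 then Tr m (x₁ * x₂ ^ (2 ^ k + 1))
          else Tr m (x₂ * x₁ ^ (2 ^ k + 1))) = A
        generalize (if Tr k z + Tr k u = 0 then Tr m (x₁ * x₂ ^ (2 ^ k + 1))
          else Tr m (x₂ * x₁ ^ (2 ^ k + 1))) = B
        linear_combination aux_z2 B + aux_z2 (Tr k (y * u)) - aux_z2 A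
    · obtain ⟨u, hu⟩ := aux_exists_tr k c hc
      refine aux_bal _ (fun x => x + (0, 0, u, 0)) (add_left_injective _) ?_ e
      rintro ⟨x₁, x₂, y, z⟩
      simp only [Prod.mk_add_mk, hf, add_zero, add_mul, mul_add, aux_Tr_add, hu]
      generalize (if Tr k z = 0 then Tr m (x₁ * x₂ ^ (2 ^ k + 1))
        else Tr m (x₂ * x₁ ^ (2 ^ k + 1))) = A
      linear_combination aux_z2 (Tr k (u * z))
  · intro U hU
    obtain ⟨z0, hz0⟩ := aux_exists_tr k 1 one_ne_zero
    rw [mul_one] at hz0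
    let τ : GaloisField 2 k →ₗ[ZMod 2] ZMod 2 := Algebra.trace (ZMod 2) (GaloisField 2 k)
    let Φ : (GaloisField 2 m × GaloisField 2 m × GaloisField 2 k × GaloisField 2 k)
        →ₗ[ZMod 2] ZMod 2 :=
      τ ∘ₗ LinearMap.snd _ _ _ ∘ₗ LinearMap.snd _ _ _ ∘ₗ LinearMap.snd _ _ _
    let W := (LinearMap.ker (Φ.domRestrict U)).map U.subtype
    have hW : ∀ w ∈ W, w ∈ U ∧ Tr k w.2.2.2 = 0 := by
      rintro _ ⟨w, hw, rfl⟩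
      exact ⟨w.2, hw⟩
    have hUW : Module.finrank (ZMod 2) U ≤ Module.finrank (ZMod 2) W + 1 := by
      have h1 := LinearMap.finrank_range_add_finrank_ker (Φ.domRestrict U)
      have h2 : Module.finrank (ZMod 2) W
          = Module.finrank (ZMod 2) (LinearMap.ker (Φ.domRestrict U)) :=
        Submodule.finrank_map_subtype_eq U _
      have h3 := Submodule.finrank_le (LinearMap.range (Φ.domRestrict U))
      rw [Module.finrank_self] at h3
      omega
    have hcv : ∀ c : GaloisField 2 m, (∀ x, Tr m (x * c) = 0) → c = 0 := by
      intro c h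
      by_contra hc
      obtain ⟨u, hu⟩ := aux_exists_tr m c hc
      rw [h u] at hu
      exact zero_ne_one hu
    have hd0 : (0 : GaloisField 2 m) ^ (2 ^ k + 1) = 0 := zero_pow (Nat.succ_ne_zero _)
    have hA2 : ∀ a ∈ W, ∀ b ∈ W, a.2.1 = 0 ∨ b.2.1 = 0 ∨ a.2.1 = b.2.1 := by
      rintro ⟨a₁, a₂, a₃, a₄⟩ ha ⟨b₁, b₂, b₃, b₄⟩ hb
      obtain ⟨ha, ha0⟩ := hW _ ha
      obtain ⟨hb, hb0⟩ := hW _ hb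
      simp only at ha0 hb0 ⊢
      apply aux_dep hm hgcd
      apply hcv
      intro x
      have h1 := hU _ ha _ hb (x, 0, 0, 0)
      have h2 := hU _ ha _ hb (0, 0, 0, 0)
      simp only [D2, Prod.mk_add_mk, hf, aux_Tr_add, ha0, hb0, aux_Tr_zero, add_zero, zero_add,
        if_true, hd0, mul_zero, zero_mul, mul_add, add_mul] at h1 h2 ⊢
      linear_combination h1 - h2
    have hA1 : ∀ a ∈ W, ∀ b ∈ W, a.1 = 0 ∨ b.1 = 0 ∨ a.1 = b.1 := by
      rintro ⟨a₁, a₂, a₃, a₄⟩ ha ⟨b₁, b₂, b₃, b₄⟩ hb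
      obtain ⟨ha, ha0⟩ := hW _ ha
      obtain ⟨hb, hb0⟩ := hW _ hb
      simp only at ha0 hb0 ⊢
      apply aux_dep hm hgcd
      apply hcv
      intro x
      have h1 := hU _ ha _ hb (0, x, 0, z0)
      have h2 := hU _ ha _ hb (0, 0, 0, z0)
      simp only [D2, Prod.mk_add_mk, hf, aux_Tr_add, ha0, hb0, hz0, aux_Tr_zero, add_zero,
        zero_add, one_ne_zero, if_false, hd0, mul_zero, zero_mul, mul_add, add_mul] at h1 h2 ⊢
      linear_combination h1 - h2
    have hr1 := aux_rank_prod W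
    have hr2 := aux_rank_prod (W.map (LinearMap.snd _ _ _))
    have hr3 := aux_rank_prod ((W.map (LinearMap.snd _ _ _)).map (LinearMap.snd _ _ _))
    have hs1 : Module.finrank (ZMod 2) (W.map (LinearMap.fst _ _ _)) ≤ 1 := by
      apply aux_rank_one
      rintro _ ⟨a, ha, rfl⟩ _ ⟨b, hb, rfl⟩
      exact hA1 a ha b hb
    have hs2 : Module.finrank (ZMod 2)
        ((W.map (LinearMap.snd _ _ _)).map (LinearMap.fst _ _ _)) ≤ 1 := by
      apply aux_rank_one
      rintro _ ⟨_, ⟨a, ha, rfl⟩, rfl⟩ _ ⟨_, ⟨b, hb, rfl⟩, rfl⟩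
      exact hA2 a ha b hb
    have hs3 := Submodule.finrank_le
      (((W.map (LinearMap.snd _ _ _)).map (LinearMap.snd _ _ _)).map (LinearMap.fst _ _ _))
    have hs4 : Module.finrank (ZMod 2)
      (((W.map (LinearMap.snd _ _ _)).map (LinearMap.snd _ _ _)).map (LinearMap.snd _ _ _)) <
        Module.finrank (ZMod 2) (GaloisField 2 k) := by
      apply Submodule.finrank_lt
      intro htop
      have hmem : z0 ∈ (⊤ : Submodule (ZMod 2) (GaloisField 2 k)) := trivial
      rw [← htop] at hmem
      obtain ⟨_, ⟨_, ⟨w, hw, rfl⟩, rfl⟩, h⟩ := hmem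
      have h5 := (hW w hw).2
      have h6 : w.2.2.2 = z0 := h
      rw [h6, hz0] at h5
      exact one_ne_zero h5
    have hfr : Module.finrank (ZMod 2) (GaloisField 2 k) = k := GaloisField.finrank 2 hk.ne'
    rw [hfr] at hs3 hs4
    omega
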